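/- For every real number α with 1 < α ≤ 2 and every real θ, the series ∑_{s∈ℤ} c^α_s e^{i s θ} converges absolutely and its sum equals |2 sin(θ/2)|^α. -/

import Mathlib

/-- Fractional centered-difference coefficients
`c^α_s = (-1)^s Γ(α+1) / (Γ(α/2 − s + 1) · Γ(α/2 + s + 1))`.
(In Lean, division by zero is zero, matching the stated convention.) -/
noncomputable def cCoef (α : ℝ) (s : ℤ) : ℝ :=
  ((-1 : ℝ) ^ s) * Real.Gamma (α + 1) /
    (Real.Gamma (α / 2 - s + 1) * Real.Gamma (α / 2 + s + 1))

open Real intervalIntegral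

lemma cCoef_neg (α : ℝ) (s : ℤ) : cCoef α (-s) = cCoef α s := by
  simp only [cCoef, zpow_neg, ← inv_zpow, inv_neg_one, Int.cast_neg, sub_neg_eq_add,
    ← sub_eq_add_neg]
  rw [mul_comm (Gamma (α / 2 + s + 1))]

/-- The reciprocal Gamma functional equation holds at every real point, poles included. -/
lemma inv_Gamma_eq_self_mul_inv_Gamma_add_one (x : ℝ) :
    (Gamma x)⁻¹ = x * (Gamma (x + 1))⁻¹ := by
  rcases ne_or_eq x 0 with h | rfl
  · rw [Gamma_add_one h, mul_inv, mul_inv_cancel_left₀ h]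
  · simp

lemma cCoef_add_one (α : ℝ) (s : ℤ) :
    (α / 2 + s + 1) * cCoef α (s + 1) = -(α / 2 - s) * cCoef α s := by
  have h₁ := inv_Gamma_eq_self_mul_inv_Gamma_add_one (α / 2 - s)
  have h₂ := inv_Gamma_eq_self_mul_inv_Gamma_add_one (α / 2 + s + 1)
  have e₁ : α / 2 - ((s + 1 : ℤ) : ℝ) + 1 = α / 2 - s := by push_cast; ring
  have e₂ : α / 2 + ((s + 1 : ℤ) : ℝ) + 1 = α / 2 + s + 1 + 1 := by push_cast; ring
  simp only [cCoef, e₁, e₂, div_eq_mul_inv _ (_ * _), mul_inv]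
  rw [h₁, h₂, zpow_add_one₀ (by norm_num)]
  ring

/-- Telescoping `(s + α/2) |c_s| - (s + 1 + α/2) |c_{s+1}| = α |c_s|` for `s ≥ 1 ≥ α/2`. -/
lemma summable_cCoef {α : ℝ} (h₀ : 0 < α) (h₂ : α ≤ 2) : Summable (cCoef α) := by
  have key : Summable fun n : ℕ => cCoef α ((n : ℤ) + 1) := by
    refine Summable.of_abs (summable_of_sum_range_le (c := (1 + α / 2) * |cCoef α 1| / α)
      (fun _ => abs_nonneg _) fun n => ?_)
    have h : ∀ n : ℕ, α * ∑ i ∈ Finset.range n, |cCoef α ((i : ℤ) + 1)| =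
        (1 + α / 2) * |cCoef α 1| - (n + 1 + α / 2) * |cCoef α ((n : ℤ) + 1)| := by
      intro n
      induction n with
      | zero => simp
      | succ n ih =>
        have hrec := congrArg abs (cCoef_add_one α ((n : ℤ) + 1))
        have hn : (0 : ℝ) ≤ n := n.cast_nonneg
        push_cast at hrec ⊢
        rw [abs_mul, abs_mul, abs_of_pos (a := α / 2 + (n + 1) + 1) (by linarith),
          abs_of_nonneg (a := -(α / 2 - (n + 1))) (by linarith)] at hrec
        rw [Finset.sum_range_succ, mul_add, ih]
        linear_combination hrec
    rw [le_div_iff₀ h₀, mul_comm, h]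
    have : 0 ≤ (n + 1 + α / 2) * |cCoef α ((n : ℤ) + 1)| := by positivity
    linarith
  have key' : Summable fun n : ℕ => cCoef α (n : ℤ) :=
    (summable_nat_add_iff (f := fun n : ℕ => cCoef α (n : ℤ)) 1).1 (by simpa using key)
  exact Summable.of_nat_of_neg key' (by simpa only [cCoef_neg] using key')

/-- The substitution `x = (1 - cos t) / 2` turns a symmetric Beta integral into a power of sine. -/
lemma integral_half_sin_rpow {α : ℝ} (h₁ : 1 ≤ α) :
    ∫ t in (0 : ℝ)..π, (sin t / 2) ^ α = Gamma ((α + 1) / 2) ^ 2 / Gamma (α + 1) := by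
  have hsubst : ∫ t in (0 : ℝ)..π, (sin t / 2) ^ α =
      ∫ x in (0 : ℝ)..1, (x * (1 - x)) ^ ((α - 1) / 2) := by
    have h := integral_comp_mul_deriv (a := 0) (b := π) (f := fun t => (1 - cos t) / 2)
      (f' := fun t => sin t / 2) (g := fun x => (x * (1 - x)) ^ ((α - 1) / 2))
      (fun x _ => by simpa using ((hasDerivAt_cos x).const_sub 1).div_const 2)
      (by fun_prop)
      (Continuous.rpow_const (by fun_prop) fun _ => Or.inr (by linarith))
    simp only [cos_zero, cos_pi] at h
    norm_num at h
    rw [← h]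
    refine integral_congr fun t ht => ?_
    rw [Set.uIcc_of_le pi_pos.le] at ht
    have hs : 0 ≤ sin t / 2 := by linarith [sin_nonneg_of_mem_Icc ht]
    have e : (1 - cos t) / 2 * (1 - (1 - cos t) / 2) = (sin t / 2) ^ (2 : ℝ) := by
      rw [rpow_two]; linear_combination (-1 / 4) * sin_sq_add_cos_sq t
    simp only [e]
    rw [← rpow_mul hs, ← rpow_add_one' hs (by linarith)]
    congr 1
    ring
  have hbeta : ((∫ x in (0 : ℝ)..1, (x * (1 - x)) ^ ((α - 1) / 2) : ℝ) : ℂ) =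
      Complex.betaIntegral ((α + 1) / 2 : ℝ) ((α + 1) / 2 : ℝ) := by
    rw [Complex.betaIntegral, ← intervalIntegral.integral_ofReal]
    refine integral_congr fun x hx => ?_
    rw [Set.uIcc_of_le zero_le_one] at hx
    have hx' : 0 ≤ 1 - x := by linarith [hx.2]
    have e : (((α + 1) / 2 : ℝ) : ℂ) - 1 = (((α - 1) / 2 : ℝ) : ℂ) := by push_cast; ring
    simp only [e]
    rw [mul_rpow hx.1 hx', Complex.ofReal_mul, Complex.ofReal_cpow hx.1, Complex.ofReal_cpow hx']
    push_cast
    rfl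
  rw [hsubst, ← Complex.ofReal_inj, hbeta]
  have hpos : 0 < (((α + 1) / 2 : ℝ) : ℂ).re := by rw [Complex.ofReal_re]; linarith
  rw [Complex.betaIntegral_eq_Gamma_mul_div _ _ hpos hpos, ← Complex.ofReal_add,
    Complex.Gamma_ofReal, Complex.Gamma_ofReal, add_halves]
  push_cast
  ring

lemma integral_sin_rpow_eq_cCoef_zero {α : ℝ} (h₁ : 1 ≤ α) :
    ∫ t in (0 : ℝ)..π, (2 * sin t) ^ α = π * cCoef α 0 := by
  have hsc : ∫ t in (0 : ℝ)..π, (2 * sin t) ^ α =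
      (4 : ℝ) ^ α * ∫ t in (0 : ℝ)..π, (sin t / 2) ^ α := by
    rw [← integral_const_mul]
    refine integral_congr fun t ht => ?_
    rw [Set.uIcc_of_le pi_pos.le] at ht
    have hs : 0 ≤ sin t / 2 := by linarith [sin_nonneg_of_mem_Icc ht]
    rw [← mul_rpow (by norm_num) hs]
    congr 1
    ring
  have hdup := Gamma_mul_Gamma_add_half ((α + 1) / 2)
  rw [show (α + 1) / 2 + 1 / 2 = α / 2 + 1 by ring, show 2 * ((α + 1) / 2) = α + 1 by ring,
    show 1 - (α + 1) = -α by ring, rpow_neg zero_le_two] at hdup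
  have hg : Gamma (α / 2 + 1) ≠ 0 := (Gamma_pos_of_pos (by linarith)).ne'
  have hg' : Gamma (α + 1) ≠ 0 := (Gamma_pos_of_pos (by linarith)).ne'
  have h2 : (2 : ℝ) ^ α ≠ 0 := (rpow_pos_of_pos two_pos α).ne'
  have h4 : (4 : ℝ) ^ α = 2 ^ α * 2 ^ α := by
    rw [← mul_rpow zero_le_two zero_le_two]; norm_num
  rw [hsc, integral_half_sin_rpow h₁, eq_div_of_mul_eq hg hdup, h4]
  simp only [cCoef, zpow_zero, Int.cast_zero, sub_zero, add_zero]
  field_simp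
  rw [sq_sqrt pi_pos.le]

/-- Integrating the derivative of `(2 sin t)^(α+1) e^{(2n+1)it}` over `[0, π]`. -/
lemma integral_exp_mul_sin_rpow_add_one {α : ℝ} (h₀ : 0 < α) (n : ℤ) :
    ((α / 2 + n + 1 : ℝ) : ℂ) * ∫ t in (0 : ℝ)..π,
        Complex.exp (2 * Complex.I * (n + 1 : ℤ) * t) * ((2 * sin t) ^ α : ℝ) =
      ((-(α / 2 - n) : ℝ) : ℂ) * ∫ t in (0 : ℝ)..π,
        Complex.exp (2 * Complex.I * n * t) * ((2 * sin t) ^ α : ℝ) := by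
  have hcont : ∀ m : ℤ, Continuous fun t : ℝ =>
      Complex.exp (2 * Complex.I * m * t) * ((2 * sin t) ^ α : ℝ) := fun m => by
    have : Continuous fun t : ℝ => (2 * sin t) ^ α :=
      Continuous.rpow_const (by fun_prop) fun _ => Or.inr h₀.le
    fun_prop
  have hderiv : ∀ t ∈ Set.uIcc 0 π, HasDerivAt
      (fun t : ℝ => Complex.exp (Complex.I * (2 * n + 1) * t) * ((2 * sin t) ^ (α + 1) : ℝ))
      (2 * ((α / 2 + n + 1 : ℝ) : ℂ) *
          (Complex.exp (2 * Complex.I * (n + 1 : ℤ) * t) * ((2 * sin t) ^ α : ℝ)) +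
        2 * ((α / 2 - n : ℝ) : ℂ) *
          (Complex.exp (2 * Complex.I * n * t) * ((2 * sin t) ^ α : ℝ))) t := by
    intro t ht
    rw [Set.uIcc_of_le pi_pos.le] at ht
    have hs : 0 ≤ 2 * sin t := by linarith [sin_nonneg_of_mem_Icc ht]
    have d₁ : HasDerivAt (fun t : ℝ => Complex.exp (Complex.I * (2 * n + 1) * t))
        (Complex.exp (Complex.I * (2 * n + 1) * t) * (Complex.I * (2 * n + 1))) t := by
      have := ((hasDerivAt_id (t : ℂ)).const_mul (Complex.I * (2 * n + 1))).cexp.comp_ofReal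
      simpa using this
    have d₂ := (((hasDerivAt_sin t).const_mul 2).rpow_const (p := α + 1)
      (Or.inr (by linarith))).ofReal_comp
    refine (d₁.mul d₂).congr_deriv ?_
    have e₁ : Complex.exp (2 * Complex.I * (n + 1 : ℤ) * t) =
        Complex.exp (Complex.I * (2 * n + 1) * t) * Complex.exp (t * Complex.I) := by
      rw [← Complex.exp_add]; congr 1; push_cast; ring
    have e₂ : Complex.exp (2 * Complex.I * n * t) =
        Complex.exp (Complex.I * (2 * n + 1) * t) * Complex.exp (-t * Complex.I) := by
      rw [← Complex.exp_add]; congr 1; ring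
    rw [e₁, e₂, Complex.exp_mul_I, Complex.exp_mul_I, Complex.cos_neg, Complex.sin_neg,
      add_sub_cancel_right, rpow_add_one' hs (by linarith)]
    push_cast
    ring
  have h := integral_eq_sub_of_hasDerivAt hderiv
    (Continuous.intervalIntegrable
      (((hcont (n + 1)).const_mul _).add ((hcont n).const_mul _)) 0 π)
  rw [integral_add (((hcont (n + 1)).const_mul _).intervalIntegrable _ _)
    (((hcont n).const_mul _).intervalIntegrable _ _), integral_const_mul, integral_const_mul,
    sin_pi, sin_zero, mul_zero, zero_rpow (by linarith)] at h
  simp only [Complex.ofReal_zero, mul_zero, sub_zero] at h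
  rw [Complex.ofReal_neg]
  linear_combination h / 2

lemma integral_exp_mul_sin_rpow {α : ℝ} (h₁ : 1 ≤ α) (n : ℤ) :
    ∫ t in (0 : ℝ)..π, Complex.exp (2 * Complex.I * n * t) * ((2 * sin t) ^ α : ℝ) =
      π * cCoef α n := by
  induction n using Int.induction_on with
  | zero =>
    simp only [Int.cast_zero, mul_zero, zero_mul, Complex.exp_zero, one_mul]
    rw [intervalIntegral.integral_ofReal, integral_sin_rpow_eq_cCoef_zero h₁,
      Complex.ofReal_mul]
  | succ n ih =>
    have h := integral_exp_mul_sin_rpow_add_one (by linarith) (n : ℤ) (α := α)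
    have hc := congrArg ((↑) : ℝ → ℂ) (cCoef_add_one α n)
    have hne : ((α / 2 + (n : ℤ) + 1 : ℝ) : ℂ) ≠ 0 := by
      rw [Complex.ofReal_ne_zero]; push_cast; positivity
    rw [Complex.ofReal_mul, Complex.ofReal_mul] at hc
    refine mul_left_cancel₀ hne ?_
    rw [h, ih]
    linear_combination -(π : ℂ) * hc
  | pred n ih =>
    have h := integral_exp_mul_sin_rpow_add_one (by linarith) (-(n : ℤ) - 1) (α := α)
    have hc := congrArg ((↑) : ℝ → ℂ) (cCoef_add_one α (-(n : ℤ) - 1))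
    have hne : ((-(α / 2 - (-(n : ℤ) - 1 : ℤ)) : ℝ) : ℂ) ≠ 0 := by
      rw [Complex.ofReal_ne_zero]
      push_cast
      have : (0 : ℝ) ≤ n := n.cast_nonneg
      linarith
    rw [Complex.ofReal_mul, Complex.ofReal_mul] at hc
    rw [sub_add_cancel] at h hc
    refine mul_left_cancel₀ hne ?_
    rw [← h, ih]
    linear_combination (π : ℂ) * hc

lemma periodic_abs_two_mul_sin_rpow (α : ℝ) :
    Function.Periodic (fun t : ℝ => ((|2 * sin t| ^ α : ℝ) : ℂ)) π := fun t => by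
  simp [sin_add_pi]

/-- The function `|2 sin t|^α` on the circle `ℝ / πℤ`. -/
noncomputable def absSinRpow (α : ℝ) (h₀ : 0 ≤ α) : C(AddCircle π, ℂ) where
  toFun := (periodic_abs_two_mul_sin_rpow α).lift
  continuous_toFun := by
    refine continuous_coinduced_dom.mpr (Complex.continuous_ofReal.comp ?_)
    exact Continuous.rpow_const (by fun_prop) fun _ => Or.inr h₀

lemma absSinRpow_coe {α : ℝ} (h₀ : 0 ≤ α) (t : ℝ) :
    absSinRpow α h₀ (t : AddCircle π) = ((|2 * sin t| ^ α : ℝ) : ℂ) := rfl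

lemma fourier_pi_coe (n : ℤ) (t : ℝ) :
    fourier n (t : AddCircle π) = Complex.exp (2 * Complex.I * n * t) := by
  rw [fourier_coe_apply]
  congr 1
  have : (π : ℂ) ≠ 0 := Complex.ofReal_ne_zero.2 pi_ne_zero
  field_simp

instance fact_pi_pos : Fact (0 < π) := ⟨pi_pos⟩

lemma fourierCoeff_absSinRpow {α : ℝ} (h₁ : 1 ≤ α) (n : ℤ) :
    fourierCoeff (absSinRpow α (zero_le_one.trans h₁)) n = cCoef α n := by
  rw [fourierCoeff_eq_intervalIntegral _ n 0, zero_add]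
  have h : ∫ t in (0 : ℝ)..π, fourier (-n) (t : AddCircle π) •
      absSinRpow α (zero_le_one.trans h₁) (t : AddCircle π) = π * cCoef α n := by
    rw [← cCoef_neg, ← integral_exp_mul_sin_rpow h₁]
    refine integral_congr fun t ht => ?_
    rw [Set.uIcc_of_le pi_pos.le] at ht
    have hs : 0 ≤ 2 * sin t := by linarith [sin_nonneg_of_mem_Icc ht]
    simp only [fourier_pi_coe, absSinRpow_coe, abs_of_nonneg hs, smul_eq_mul]
  rw [h, Complex.real_smul]
  have : (π : ℂ) ≠ 0 := Complex.ofReal_ne_zero.2 pi_ne_zero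
  push_cast
  field_simp

/-- For `1 < α ≤ 2` and every real `θ`, the series `∑_{s ∈ ℤ} c^α_s e^{i s θ}`
converges absolutely and its sum equals `|2 sin(θ/2)|^α`. -/
theorem generating_function_of_cCoef (α : ℝ) (hα₁ : 1 < α) (hα₂ : α ≤ 2) (θ : ℝ) :
    Summable (fun s : ℤ => ‖(cCoef α s : ℂ) * Complex.exp (Complex.I * s * θ)‖) ∧
    ∑' s : ℤ, (cCoef α s : ℂ) * Complex.exp (Complex.I * s * θ) =
      ((|2 * Real.sin (θ / 2)| ^ α : ℝ) : ℂ) := by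
  have hsum := summable_cCoef (by linarith) hα₂
  have hcoeff : fourierCoeff (absSinRpow α (zero_le_one.trans hα₁.le)) =
      fun n => (cCoef α n : ℂ) := funext (fourierCoeff_absSinRpow hα₁.le)
  have hexp : ∀ s : ℤ, fourier s ((θ / 2 : ℝ) : AddCircle π) =
      Complex.exp (Complex.I * s * θ) := fun s => by
    rw [fourier_pi_coe]
    congr 1
    push_cast
    ring
  have hF := has_pointwise_sum_fourier_series_of_summable
    (f := absSinRpow α (zero_le_one.trans hα₁.le))
    (by rw [hcoeff]; exact Complex.ofRealCLM.summable hsum) ((θ / 2 : ℝ) : AddCircle π)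
  simp only [hcoeff, hexp, absSinRpow_coe, smul_eq_mul] at hF
  exact ⟨hF.summable.norm, hF.tsum_eq⟩
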